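/- Let p = 3k+1 be prime with k ≥ 1 and G = (ℤ/pℤ)^s. Then the maximum size of a sum-free subset of G is k·p^{s-1}. -/

import Mathlib

/-!
Let `A` be sum-free in a vector space over `ZMod p`. By Cauchy–Davenport every line through the
origin contains at most `k` points of `A`; if all contain fewer, counting over these lines gives
the bound. Otherwise let a line contain exactly `k` points, and cut each plane through it into
translates of that line. The cross sections `B i` satisfy `(B i + B j) ∩ B (i + j) = ∅`, and it
suffices to show `∑ i, #(B i) ≤ k * p`, since averaging over the planes then bounds `A`.

The delicate case is that of no empty section and some section of size `k + 1`. Vosper's theorem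
makes the latter an arithmetic progression, and a linear substitution turns it into
`B 1 = {k + 1, …, 2 * k + 1}`, forcing `B 0 = {k + 1, …, 2 * k}`. Each `B i` is then contained in a
short arc, and the arcs of `B i` and `B (i + 1)` lie close to each other, with a displacement
controlled by `#(B i)` and `#(B (i + 1))`. The displacements along the closed walk
`0, 1, …, p - 1, 0` add up to a multiple of `p`, whereas `∑ i, #(B i) > k * p` would place the sum
strictly between `0` and `p`.
-/

open Finset
open scoped Pointwise

/-- The sums `a + b` with `a ∈ A` and `b ∈ B` all miss `C`. -/
def SumsAvoid {G : Type*} [Add G] (A B C : Finset G) : Prop :=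
  ∀ a ∈ A, ∀ b ∈ B, ∀ c ∈ C, a + b ≠ c

/-- Sum-free subsets of an additive structure. -/
def IsSumFree {G : Type*} [Add G] (A : Finset G) : Prop :=
  SumsAvoid A A A

/-- A family of sets, indexed by an additive structure, whose union of `{i} × B i` is sum-free. -/
def IsSumFreeFamily {ι G : Type*} [Add ι] [Add G] (B : ι → Finset G) : Prop :=
  ∀ i j, SumsAvoid (B i) (B j) (B (i + j))

/-- `d` is an almost period of `A`: translating `A` by `d` moves at most one element out of `A`.
For `d ≠ 0` in `ZMod p` the nonempty sets with this property are the arithmetic progressions of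
common difference `d`, and the property is easier to propagate through sumsets than an explicit
parametrisation. -/
def AlmostInvariant {G : Type*} [DecidableEq G] [Add G] (d : G) (A : Finset G) : Prop :=
  #(A \ (d +ᵥ A)) ≤ 1

theorem IsSumFree.zero_notMem {G : Type*} [AddZeroClass G] {A : Finset G} (hA : IsSumFree A) :
    0 ∉ A :=
  fun h ↦ hA 0 h 0 h 0 h (add_zero 0)

section AddCommGroup

variable {G : Type*} [DecidableEq G] [AddCommGroup G] {A B C : Finset G}

theorem SumsAvoid.zero_notMem (h : SumsAvoid A B C) : 0 ∉ A + B + -C := by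
  simp only [mem_add, mem_neg]
  rintro ⟨_, ⟨a, ha, b, hb, rfl⟩, _, ⟨c, hc, rfl⟩, h0⟩
  exact h a ha b hb c hc (add_neg_eq_zero.1 h0)

theorem card_add_card_le_card_of_zero_notMem [Fintype G] (h : 0 ∉ A + C) :
    #A + #C ≤ Fintype.card G := by
  rw [← card_neg A, ← card_union_of_disjoint]
  · exact card_le_univ _
  · refine disjoint_left.2 fun x hx hxC ↦ h ?_
    simpa using add_mem_add (mem_neg'.1 hx) hxC

theorem AlmostInvariant.card_le {d : G} (h : AlmostInvariant d A) :
    #A ≤ #(A ∩ (d +ᵥ A)) + 1 := by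
  have := card_sdiff_add_card_inter A (d +ᵥ A)
  unfold AlmostInvariant at h
  omega

theorem almostInvariant_of_card_union_le {d : G} (h : #(A ∪ (-d +ᵥ A)) ≤ #A + 1) :
    AlmostInvariant d A := by
  have := card_sdiff_add_card A (d +ᵥ A)
  rw [← card_vadd_finset d, vadd_finset_union, vadd_neg_vadd, union_comm] at h
  rw [card_vadd_finset] at this
  unfold AlmostInvariant
  omega

theorem almostInvariant_of_card_eq_two (hA : #A = 2) : ∃ d ≠ 0, AlmostInvariant d A := by
  obtain ⟨x, y, hxy, rfl⟩ := card_eq_two.1 hA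
  refine ⟨y - x, sub_ne_zero.2 hxy.symm, (card_le_card (t := {x}) ?_).trans (card_singleton x).le⟩
  intro z hz
  simp only [vadd_finset_insert, vadd_finset_singleton, vadd_eq_add, sub_add_cancel, mem_sdiff,
    mem_insert, mem_singleton, not_or] at hz ⊢
  tauto

theorem inter_vadd_add_union_neg_vadd_subset (d : G) :
    (A ∩ (d +ᵥ A)) + (B ∪ (-d +ᵥ B)) ⊆ A + B := by
  rw [add_union]
  refine union_subset (add_subset_add_right inter_subset_left) ?_
  calc A ∩ (d +ᵥ A) + (-d +ᵥ B) ⊆ (d +ᵥ A) + (-d +ᵥ B) := add_subset_add_right inter_subset_right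
    _ = A + B := by rw [vadd_add_assoc, add_vadd_comm, vadd_neg_vadd]

theorem disjoint_add_erase_vadd {Y : Finset G} {b₀ : G} (hb₀ : b₀ ∈ B) (hYA : Y ⊆ A)
    (h : ∀ y ∈ Y, #(B ∩ (-(y - b₀) +ᵥ A)) ≤ 1) : Disjoint (Y + B.erase b₀) (b₀ +ᵥ A) := by
  simp only [disjoint_left, mem_add, mem_erase, mem_vadd_finset, vadd_eq_add]
  rintro _ ⟨y, hy, b, ⟨hbb₀, hb⟩, rfl⟩ ⟨a, ha, hab⟩
  refine hbb₀ (card_le_one.1 (h y hy) b ?_ b₀ ?_) <;> rw [mem_inter, mem_neg_vadd_finset_iff]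
  · exact ⟨hb, by rwa [vadd_eq_add, sub_add_eq_add_sub, ← hab, add_sub_cancel_left]⟩
  · exact ⟨hb₀, by simpa using hYA hy⟩

theorem add_subset_vadd_of_subset_neg_vadd {X : Finset G} {b₀ : G}
    (h : ∀ x ∈ X, B ⊆ -(x - b₀) +ᵥ A) : X + B ⊆ b₀ +ᵥ A := by
  refine add_subset_iff.2 fun x hx b hb ↦ mem_vadd_finset.2 ⟨x - b₀ + b, ?_, ?_⟩
  · exact mem_neg_vadd_finset_iff.1 (h x hx hb)
  · rw [vadd_eq_add, ← add_assoc, add_sub_cancel]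

end AddCommGroup

section ZMod

variable {p : ℕ} [Fact p.Prime] {A B C : Finset (ZMod p)}

theorem card_add_card_le_card_add_add_one (hA : A.Nonempty) (hB : B.Nonempty) (h : #(A + B) < p) :
    #A + #B ≤ #(A + B) + 1 := by
  have := ZMod.cauchy_davenport Fact.out hA hB
  omega

theorem card_add_card_add_card_le_of_zero_notMem (hA : A.Nonempty) (hB : B.Nonempty)
    (hC : C.Nonempty) (h : 0 ∉ A + B + C) : #A + #B + #C ≤ p + 1 := by
  have hle := card_add_card_le_card_of_zero_notMem h
  rw [ZMod.card] at hle
  have := card_add_card_le_card_add_add_one hA hB (by have := hC.card_pos; omega)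
  omega

theorem SumsAvoid.card_add_card_add_card_le (h : SumsAvoid A B C) (hA : A.Nonempty)
    (hB : B.Nonempty) (hC : C.Nonempty) : #A + #B + #C ≤ p + 1 := by
  simpa using card_add_card_add_card_le_of_zero_notMem hA hB hC.neg h.zero_notMem

theorem IsSumFree.three_mul_card_le (h : IsSumFree A) : 3 * #A ≤ p + 1 := by
  rcases A.eq_empty_or_nonempty with rfl | hA
  · simp
  · have := SumsAvoid.card_add_card_add_card_le h hA hA hA
    omega

theorem AlmostInvariant.of_zero_notMem {d : ZMod p} (hd : AlmostInvariant d A) (hA : 2 ≤ #A)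
    (hB : B.Nonempty) (hC : C.Nonempty) (h : 0 ∉ A + B + C) (hcard : p + 1 ≤ #A + #B + #C) :
    AlmostInvariant d B := by
  have hA_inter := hd.card_le
  have hle := card_add_card_add_card_le_of_zero_notMem (A := A ∩ (d +ᵥ A)) (B := B ∪ (-d +ᵥ B))
    (card_pos.1 (by omega)) (hB.mono subset_union_left) hC
    fun h0 ↦ h (add_subset_add_right (inter_vadd_add_union_neg_vadd_subset d) h0)
  exact almostInvariant_of_card_union_le (by omega)

/-- This choice of `e` makes the Dyson `e`-transform shrink `B` properly, yet keep two elements. If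
there is none, translating `A` by `b₀ - x` for `x ∈ A` leaves at most one or all elements of `B`
inside, and Cauchy–Davenport for either class of elements `x` shows that `A` is too small. -/
theorem exists_card_inter_vadd (hA : 2 ≤ #A) (hB : 3 ≤ #B) (h : #(A + B) < #A + #B)
    (hp : #(A + B) < p) :
    ∃ e : ZMod p, 2 ≤ #(B ∩ (-e +ᵥ A)) ∧ #(B ∩ (-e +ᵥ A)) < #B := by
  by_contra! hcon
  obtain ⟨b₀, hb₀⟩ : B.Nonempty := card_pos.1 (by omega)
  have hAB : #A ≤ #(A + B) := card_le_card_add_right ⟨b₀, hb₀⟩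
  set X : Finset (ZMod p) := {a ∈ A | 2 ≤ #(B ∩ (-(a - b₀) +ᵥ A))}
  set Y : Finset (ZMod p) := {a ∈ A | ¬2 ≤ #(B ∩ (-(a - b₀) +ᵥ A))}
  have hXY : #X + #Y = #A := card_filter_add_card_filter_not _
  have hY_disj : Disjoint (Y + B.erase b₀) (b₀ +ᵥ A) :=
    disjoint_add_erase_vadd hb₀ (filter_subset _ _) fun y hy ↦ by have := (mem_filter.1 hy).2; omega
  have hY_sub : (Y + B.erase b₀) ∪ (b₀ +ᵥ A) ⊆ A + B := by
    refine union_subset (add_subset_add (filter_subset _ _) (erase_subset _ _)) ?_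
    rw [add_comm]
    exact vadd_finset_subset_add hb₀
  have hY_card : #Y ≤ 1 := by
    by_contra! hY₂
    have hle := card_le_card hY_sub
    rw [card_union_of_disjoint hY_disj, card_vadd_finset] at hle
    have hB' := card_erase_of_mem hb₀
    have := card_add_card_le_card_add_add_one (A := Y) (B := B.erase b₀)
      (card_pos.1 (by omega)) (card_pos.1 (by omega)) (by omega)
    omega
  have hX_sub : X + B ⊆ b₀ +ᵥ A := add_subset_vadd_of_subset_neg_vadd fun x hx ↦
    inter_eq_left.1 (eq_of_subset_of_card_le inter_subset_left (hcon (x - b₀) (mem_filter.1 hx).2))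
  have hX_card := card_le_card hX_sub
  rw [card_vadd_finset] at hX_card
  have := card_add_card_le_card_add_add_one (A := X) (B := B) (card_pos.1 (by omega)) ⟨b₀, hb₀⟩
    (by omega)
  omega

/-- Vosper's theorem in symmetric form. -/
theorem exists_common_almostInvariant (hA : 2 ≤ #A) (hB : 2 ≤ #B) (hC : 2 ≤ #C) (h : 0 ∉ A + B + C)
    (hcard : p + 1 ≤ #A + #B + #C) :
    ∃ d ≠ 0, AlmostInvariant d A ∧ AlmostInvariant d B ∧ AlmostInvariant d C := by
  induction hn : #B using Nat.strong_induction_on generalizing A B with | _ n ih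
  subst hn
  have hA₀ : A.Nonempty := card_pos.1 (by omega)
  have hB₀ : B.Nonempty := card_pos.1 (by omega)
  have hC₀ : C.Nonempty := card_pos.1 (by omega)
  obtain hB₂ | hB₃ := hB.eq_or_lt
  · obtain ⟨d, hd, hdB⟩ := almostInvariant_of_card_eq_two hB₂.symm
    have hBAC : 0 ∉ B + A + C := by rwa [add_comm B]
    have hBCA : 0 ∉ B + C + A := by rwa [add_right_comm]
    exact ⟨d, hd, hdB.of_zero_notMem hB hA₀ hC₀ hBAC (by omega), hdB,
      hdB.of_zero_notMem hB hC₀ hA₀ hBCA (by omega)⟩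
  · have hle := card_add_card_le_card_of_zero_notMem h
    rw [ZMod.card] at hle
    obtain ⟨e, he₂, heB⟩ := exists_card_inter_vadd hA hB₃ (by omega) (by omega)
    have hsub : (A ∪ (e +ᵥ B)) + (B ∩ (-e +ᵥ A)) ⊆ A + B := addDysonETransform.subset e (A, B)
    have hsum : #(A ∪ (e +ᵥ B)) + #(B ∩ (-e +ᵥ A)) = #A + #B := addDysonETransform.card e (A, B)
    obtain ⟨d, hd, -, -, hdC⟩ := ih _ heB (by omega) he₂
      (fun h0 ↦ h (add_subset_add_right hsub h0)) (by omega) rfl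
    have hCAB : 0 ∉ C + A + B := by rwa [add_assoc, add_comm]
    have hCBA : 0 ∉ C + B + A := by rwa [add_right_comm]
    exact ⟨d, hd, hdC.of_zero_notMem hC hA₀ hB₀ hCAB (by omega),
      hdC.of_zero_notMem hC hB₀ hA₀ hCBA (by omega), hdC⟩

theorem AlmostInvariant.exists_forall_sub_mem {d : ZMod p} (h : AlmostInvariant d A)
    (hA : A.Nonempty) : ∃ b ∈ A, ∀ x ∈ A, x ≠ b → x - d ∈ A := by
  obtain ⟨b, hb⟩ : ∃ b, A \ (d +ᵥ A) ⊆ {b} := card_le_one_iff_subset_singleton.1 h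
  have hpred : ∀ x ∈ A, x ≠ b → x - d ∈ A := fun x hx hxb ↦ by
    by_contra hxd
    refine hxb (mem_singleton.1 (hb (mem_sdiff.2 ⟨hx, fun hxA ↦ hxd ?_⟩)))
    obtain ⟨y, hy, rfl⟩ := mem_vadd_finset.1 hxA
    simpa using hy
  by_cases hbA : b ∈ A
  · exact ⟨b, hbA, hpred⟩
  · obtain ⟨c, hc⟩ := hA
    exact ⟨c, hc, fun x hx _ ↦ hpred x hx (ne_of_mem_of_not_mem hx hbA)⟩

theorem injOn_Iio_add_natCast_mul {d : ZMod p} (hd : d ≠ 0) (b : ZMod p) :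
    Set.InjOn (fun i : ℕ ↦ b + i * d) (Set.Iio p) := fun _ hi _ hj hij ↦
  CharP.natCast_injOn_Iio (ZMod p) p hi hj (mul_right_cancel₀ hd (add_left_cancel hij))

theorem AlmostInvariant.eq_image_range {d : ZMod p} (h : AlmostInvariant d A) (hd : d ≠ 0)
    (hA : A.Nonempty) : ∃ b, A = (range #A).image fun i : ℕ ↦ b + i * d := by
  obtain ⟨b, -, hb⟩ := h.exists_forall_sub_mem hA
  have hinj := injOn_Iio_add_natCast_mul hd b
  refine ⟨b, eq_of_subset_of_card_le (fun x hx ↦ ?_) (card_image_le.trans (card_range _).le)⟩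
  obtain ⟨n, hn, rfl⟩ : ∃ n < p, b + (n : ZMod p) * d = x :=
    ⟨((x - b) / d).val, ZMod.val_lt _, by
      rw [ZMod.natCast_zmod_val, div_mul_cancel₀ _ hd, add_sub_cancel]⟩
  have hdown : ∀ i ≤ n, b + (i : ZMod p) * d ∈ A := fun i hi ↦ by
    induction hi using Nat.decreasingInduction with
    | self => exact hx
    | of_succ l hl ih =>
      have hne : b + ((l + 1 : ℕ) : ZMod p) * d ≠ b := fun h0 ↦
        l.succ_ne_zero (hinj (Set.mem_Iio.2 (by omega)) (Set.mem_Iio.2 (by omega))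
          (by simpa using h0))
      convert hb _ ih hne using 1
      push_cast
      ring
  have hcard : n + 1 ≤ #A := by
    rw [← card_range (n + 1), ← card_image_of_injOn (hinj.mono ?_)]
    · exact card_le_card (image_subset_iff.2 fun i hi ↦ hdown i (mem_range_succ_iff.1 hi))
    · exact fun i hi ↦ (mem_range_succ_iff.1 hi).trans_lt hn
  exact mem_image_of_mem _ (mem_range.2 hcard)

end ZMod

/-- `X` lies in the arc `a, a + 1, …, a + m` of `ZMod p` and contains both of its ends. -/
structure SpansArc {p : ℕ} (X : Finset (ZMod p)) (a : ZMod p) (m : ℤ) : Prop where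
  left_mem : a ∈ X
  right_mem : a + m ∈ X
  exists_eq : ∀ x ∈ X, ∃ z : ℤ, 0 ≤ z ∧ z ≤ m ∧ x = a + z

section Arc

variable {p : ℕ} {X Y : Finset (ZMod p)} {a : ZMod p} {m : ℤ}

theorem exists_eq_add_intCast [NeZero p] (a x : ZMod p) (l : ℤ) :
    ∃ z : ℤ, l ≤ z ∧ z < l + p ∧ x = a + z := by
  have := ZMod.val_lt (x - a - (l : ZMod p))
  exact ⟨l + (x - a - (l : ZMod p)).val, by omega, by omega, by simp⟩

theorem SpansArc.length_nonneg (h : SpansArc X a m) : 0 ≤ m := by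
  obtain ⟨z, hz, hzm, -⟩ := h.exists_eq a h.left_mem
  exact hz.trans hzm

theorem SpansArc.card_le (h : SpansArc X a m) : #X ≤ m + 1 := by
  have hsub : X ⊆ (Icc 0 m).image fun z : ℤ ↦ a + z := fun x hx ↦ by
    obtain ⟨z, hz, hzm, rfl⟩ := h.exists_eq x hx
    exact mem_image_of_mem _ (mem_Icc.2 ⟨hz, hzm⟩)
  have hle := (card_le_card hsub).trans card_image_le
  rw [Int.card_Icc] at hle
  have := h.length_nonneg
  omega

variable [NeZero p] {k : ℕ} (hp : p = 3 * k + 1)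

include hp

theorem exists_spansArc (hX : X.Nonempty)
    (hmid : ∀ z : ℤ, k + 1 ≤ z → z ≤ 2 * k → ∀ x ∈ X, x + z ∉ X) :
    ∃ a, ∃ m ≤ (k : ℤ), SpansArc X a m := by
  obtain ⟨x₀, hx₀⟩ := hX
  let F : Finset ℤ := {z ∈ Icc (-k : ℤ) k | x₀ + z ∈ X}
  have mem_F {z : ℤ} : z ∈ F ↔ (-k ≤ z ∧ z ≤ k) ∧ x₀ + z ∈ X := by
    rw [mem_filter, mem_Icc]
  have hF : F.Nonempty := ⟨0, mem_F.2 ⟨by omega, by simpa⟩⟩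
  have hmin := mem_F.1 (F.min'_mem hF)
  have hmax := mem_F.1 (F.max'_mem hF)
  refine ⟨x₀ + (F.min' hF : ℤ), F.max' hF - F.min' hF, ?_, hmin.2, by simpa using hmax.2, ?_⟩
  · by_contra! hlt
    refine hmid (F.max' hF - F.min' hF) (by omega) (by omega) _ hmin.2 ?_
    simpa using hmax.2
  · intro x hx
    obtain ⟨z, hz, hzp, rfl⟩ := exists_eq_add_intCast x₀ x (-k)
    have hzk : z ≤ k := by
      by_contra! hlt
      exact hmid z (by omega) (by omega) x₀ hx₀ hx
    have hzF : z ∈ F := mem_F.2 ⟨⟨hz, hzk⟩, hx⟩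
    have := F.min'_le z hzF
    have := F.le_max' z hzF
    exact ⟨z - F.min' hF, by omega, by omega, by simp⟩

theorem SpansArc.exists_eq_add_of_avoid (hX : SpansArc X a m) (hm : m ≤ k)
    (havoid : ∀ z : ℤ, k + 1 ≤ z → z ≤ 2 * k + 1 → ∀ x ∈ X, x + z ∉ Y) {y : ZMod p} (hy : y ∈ Y) :
    ∃ z : ℤ, m + 1 - k ≤ z ∧ z ≤ k ∧ y = a + z := by
  obtain ⟨z, hz, hzp, rfl⟩ := exists_eq_add_intCast a y (m + 1 - k)
  refine ⟨z, hz, ?_, rfl⟩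
  by_contra! hlt
  obtain hz' | hz' := le_or_gt z (2 * k + 1)
  · exact havoid z hlt hz' a hX.left_mem hy
  · exact havoid (z - m) (by omega) (by omega) _ hX.right_mem (by simpa using hy)

theorem SpansArc.exists_intCast_eq_sub {b : ZMod p} {n : ℤ} (hX : SpansArc X a m) (hm : m ≤ k)
    (hY : SpansArc Y b n) (hn : n ≤ k)
    (havoid : ∀ z : ℤ, k + 1 ≤ z → z ≤ 2 * k + 1 → ∀ x ∈ X, x + z ∉ Y) :
    ∃ z : ℤ, (z : ZMod p) = b - a ∧ (#X : ℤ) - k ≤ z ∧ z ≤ k + 1 - #Y := by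
  obtain ⟨u, hu, huk, hbu⟩ := hX.exists_eq_add_of_avoid hp hm havoid hY.left_mem
  obtain ⟨v, hv, hvk, hbv⟩ := hX.exists_eq_add_of_avoid hp hm havoid hY.right_mem
  have hdvd : (p : ℤ) ∣ v - u - n := by
    rw [← ZMod.intCast_zmod_eq_zero_iff_dvd]
    push_cast
    linear_combination hbu - hbv
  have := hX.length_nonneg
  have := hY.length_nonneg
  have huv : v - u - n = 0 := Int.eq_zero_of_abs_lt_dvd hdvd (abs_lt.2 (by omega))
  have := hX.card_le
  have := hY.card_le
  exact ⟨u, by rw [hbu, add_sub_cancel_left], by omega, by omega⟩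

theorem IsSumFreeFamily.sum_card_le_of_intervals {B : ZMod p → Finset (ZMod p)}
    (hB : IsSumFreeFamily B) (hne : ∀ i, (B i).Nonempty)
    (h₀ : ∀ z : ℤ, k + 1 ≤ z → z ≤ 2 * k → (z : ZMod p) ∈ B 0)
    (h₁ : ∀ z : ℤ, k + 1 ≤ z → z ≤ 2 * k + 1 → (z : ZMod p) ∈ B 1) :
    ∑ i, #(B i) ≤ k * p := by
  have hspan : ∀ i, ∃ a, ∃ m ≤ (k : ℤ), SpansArc (B i) a m := fun i ↦
    exists_spansArc hp (hne i) fun z hz hz' x hx hxz ↦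
      hB i 0 x hx z (h₀ z hz hz') _ (by rwa [add_zero]) rfl
  choose a m hm hspan using hspan
  have hstep : ∀ i, ∃ z : ℤ, (z : ZMod p) = a (i + 1) - a i ∧ (#(B i) : ℤ) - k ≤ z ∧
      z ≤ k + 1 - #(B (i + 1)) := fun i ↦
    (hspan i).exists_intCast_eq_sub hp (hm i) (hspan (i + 1)) (hm (i + 1))
      fun z hz hz' x hx hxz ↦ hB i 1 x hx z (h₁ z hz hz') _ hxz rfl
  choose δ hδ hlower hupper using hstep
  have hshift {M : Type} [AddCommMonoid M] (f : ZMod p → M) : ∑ i, f (i + 1) = ∑ i, f i :=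
    Equiv.sum_comp (Equiv.addRight 1) f
  have hdvd : (p : ℤ) ∣ ∑ i, δ i := by
    rw [← ZMod.intCast_zmod_eq_zero_iff_dvd]
    push_cast
    simp only [hδ, sum_sub_distrib, hshift, sub_self]
  have hle := sum_le_sum fun i (_ : i ∈ univ) ↦ hlower i
  have hge := sum_le_sum fun i (_ : i ∈ univ) ↦ hupper i
  rw [sum_sub_distrib] at hle hge
  rw [hshift fun i ↦ (#(B i) : ℤ)] at hge
  simp only [sum_const, card_univ, ZMod.card, nsmul_eq_mul] at hle hge
  by_contra! hlt
  zify at hlt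
  have hpos : 0 < ∑ i, δ i := by nlinarith
  have hlt_p : ∑ i, δ i < p := by nlinarith
  exact absurd (Int.le_of_dvd hpos hdvd) (by omega)

end Arc

section Affine

variable {F : Type*} [Field F] {d : F}

/-- The family obtained from `B` by the linear substitution `(i, x) ↦ (t * i, d * x + e * i)` of
the plane. -/
def affineFamily (B : F → Finset F) (hd : d ≠ 0) (e t i : F) : Finset F :=
  (B (t * i)).map ((Equiv.mulLeft₀ d hd).trans (Equiv.addRight (e * i))).symm.toEmbedding

theorem mem_affineFamily {B : F → Finset F} {hd : d ≠ 0} {e t i x : F} :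
    x ∈ affineFamily B hd e t i ↔ d * x + e * i ∈ B (t * i) := by
  rw [affineFamily, mem_map_equiv]
  rfl

theorem IsSumFreeFamily.affine {B : F → Finset F} (hB : IsSumFreeFamily B) (hd : d ≠ 0)
    (e t : F) : IsSumFreeFamily (affineFamily B hd e t) := by
  rintro i j x hx y hy _ hxy rfl
  rw [mem_affineFamily] at hx hy hxy
  rw [mul_add t] at hxy
  exact hB _ _ _ hx _ hy _ hxy (by ring)

theorem sum_card_affineFamily [Fintype F] (B : F → Finset F) (hd : d ≠ 0) (e : F) {t : F}
    (ht : t ≠ 0) : ∑ i, #(affineFamily B hd e t i) = ∑ i, #(B i) := by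
  simp only [affineFamily, card_map]
  exact Equiv.sum_comp (Equiv.mulLeft₀ t ht) fun i ↦ #(B i)

end Affine

section Plane

variable {p k : ℕ} (hp : p = 3 * k + 1) {B : ZMod p → Finset (ZMod p)}

include hp

theorem intCast_mem_of_sumsAvoid_interval [NeZero p] {X Y : Finset (ZMod p)} (hX : k ≤ #X)
    (hY : ∀ z : ℤ, k + 1 ≤ z → z ≤ 2 * k + 1 → (z : ZMod p) ∈ Y) (h : SumsAvoid X Y Y) {z : ℤ}
    (hz : k + 1 ≤ z) (hz' : z ≤ 2 * k) : (z : ZMod p) ∈ X := by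
  have hsub : X ⊆ (Icc (k + 1 : ℤ) (2 * k)).image ((↑) : ℤ → ZMod p) := fun x hx ↦ by
    obtain ⟨w, hw, hwp, rfl⟩ := exists_eq_add_intCast 0 x (-k)
    rw [zero_add] at hx ⊢
    refine mem_image_of_mem _ (mem_Icc.2 ⟨?_, by omega⟩)
    by_contra! hwk
    obtain ⟨y, hy, hyk, hwy, hwyk⟩ : ∃ y : ℤ, k + 1 ≤ y ∧ y ≤ 2 * k + 1 ∧
        k + 1 ≤ w + y ∧ w + y ≤ 2 * k + 1 := by
      obtain hw₀ | hw₀ := le_total 0 w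
      · exact ⟨k + 1, by omega⟩
      · exact ⟨2 * k + 1, by omega⟩
    exact h _ hx _ (hY y hy hyk) _ (hY _ hwy hwyk) (by push_cast; rfl)
  rw [eq_of_subset_of_card_le hsub (card_image_le.trans (by rw [Int.card_Icc]; omega))]
  exact mem_image_of_mem _ (mem_Icc.2 ⟨hz, hz'⟩)

variable [Fact p.Prime]

theorem two_le_of_prime_eq_three_mul_add_one : 2 ≤ k := by
  have hprime : p.Prime := Fact.out
  by_contra! hk
  interval_cases k <;> subst hp <;> norm_num at hprime

theorem IsSumFreeFamily.exists_eq_progression (hB : IsSumFreeFamily B) (h₀ : #(B 0) = k)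
    {t : ZMod p} (ht : #(B t) = k + 1) :
    ∃ d ≠ 0, ∃ b, B t = (range (k + 1)).image fun i : ℕ ↦ b + (i : ZMod p) * d := by
  have hk := two_le_of_prime_eq_three_mul_add_one hp
  have hzero : 0 ∉ B 0 + B t + -B t := by simpa using (hB 0 t).zero_notMem
  obtain ⟨d, hd, -, hdt, -⟩ := exists_common_almostInvariant (by omega) (by omega)
    (by rw [card_neg]; omega) hzero (by rw [card_neg]; omega)
  obtain ⟨b, hb⟩ := hdt.eq_image_range hd (card_pos.1 (by omega))
  exact ⟨d, hd, b, by rwa [ht] at hb⟩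

theorem IsSumFreeFamily.sum_card_le_of_card_eq_add_one (hB : IsSumFreeFamily B)
    (hne : ∀ i, (B i).Nonempty) (h₀ : #(B 0) = k) {t : ZMod p} (ht : #(B t) = k + 1) :
    ∑ i, #(B i) ≤ k * p := by
  have ht₀ : t ≠ 0 := by rintro rfl; omega
  obtain ⟨d, hd, b, hb⟩ := hB.exists_eq_progression hp h₀ ht
  -- The substitution `x ↦ d * x + e` carries `k + 1, …, 2 * k + 1` to the progression `B t`.
  let e := b - (k + 1) * d
  have h₁ : ∀ z : ℤ, k + 1 ≤ z → z ≤ 2 * k + 1 → (z : ZMod p) ∈ affineFamily B hd e t 1 := by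
    intro z hz hz'
    obtain ⟨i, rfl⟩ : ∃ i : ℕ, z = k + 1 + i := ⟨(z - (k + 1)).toNat, by omega⟩
    rw [mem_affineFamily, mul_one, mul_one, hb]
    refine mem_image.2 ⟨i, mem_range.2 (by omega), ?_⟩
    push_cast
    ring
  have hB' := hB.affine hd e t
  have hcard : #(affineFamily B hd e t 0) = k := by
    rw [affineFamily, card_map, mul_zero, h₀]
  rw [← sum_card_affineFamily B hd e ht₀]
  refine hB'.sum_card_le_of_intervals hp (fun i ↦ (hne _).map) (fun z hz hz' ↦ ?_) h₁
  exact intCast_mem_of_sumsAvoid_interval hp hcard.ge h₁ (by simpa using hB' 0 1) hz hz'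

theorem IsSumFreeFamily.card_le_add_one (hB : IsSumFreeFamily B) (h₀ : #(B 0) = k) (i : ZMod p) :
    #(B i) ≤ k + 1 := by
  have hk := two_le_of_prime_eq_three_mul_add_one hp
  obtain hi | hi := (B i).eq_empty_or_nonempty
  · simp [hi]
  · have h := hB 0 i
    rw [zero_add] at h
    have := h.card_add_card_add_card_le (card_pos.1 (by omega)) hi hi
    omega

theorem IsSumFreeFamily.card_filter_card_eq_add_one_le (hB : IsSumFreeFamily B) :
    #{i | #(B i) = k + 1} ≤ k := by
  have hfree : IsSumFree ({i | #(B i) = k + 1} : Finset (ZMod p)) := by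
    rintro i hi j hj _ hij rfl
    simp only [mem_filter, mem_univ, true_and] at hi hj hij
    have := (hB i j).card_add_card_add_card_le (card_pos.1 (by omega)) (card_pos.1 (by omega))
      (card_pos.1 (by omega))
    omega
  have := hfree.three_mul_card_le
  omega

theorem IsSumFreeFamily.sum_card_le_of_eq_empty (hB : IsSumFreeFamily B) (h₀ : #(B 0) = k)
    {j : ZMod p} (hj : B j = ∅) : ∑ i, #(B i) ≤ k * p := by
  have hterm : ∀ i, #(B i) + (if i = j then k else 0) ≤ k + if #(B i) = k + 1 then 1 else 0 := by
    intro i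
    have := hB.card_le_add_one hp h₀ i
    obtain rfl | hij := eq_or_ne i j
    · simp [hj]
    · rw [if_neg hij]
      split_ifs <;> omega
  have hsum := sum_le_sum fun i (_ : i ∈ univ) ↦ hterm i
  simp only [sum_add_distrib, sum_ite_eq', mem_univ, if_true, ← card_filter, sum_const, card_univ,
    ZMod.card, smul_eq_mul] at hsum
  have := hB.card_filter_card_eq_add_one_le hp
  rw [mul_comm]
  omega

theorem IsSumFreeFamily.sum_card_le (hB : IsSumFreeFamily B) (h₀ : #(B 0) = k) :
    ∑ i, #(B i) ≤ k * p := by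
  by_cases hempty : ∃ j, B j = ∅
  · obtain ⟨j, hj⟩ := hempty
    exact hB.sum_card_le_of_eq_empty hp h₀ hj
  by_cases hlarge : ∃ t, #(B t) = k + 1
  · obtain ⟨t, ht⟩ := hlarge
    exact hB.sum_card_le_of_card_eq_add_one hp
      (fun i ↦ nonempty_iff_ne_empty.2 fun hi ↦ hempty ⟨i, hi⟩) h₀ ht
  calc ∑ i, #(B i) ≤ ∑ _i : ZMod p, k := sum_le_sum fun i _ ↦
        Nat.le_of_lt_succ ((hB.card_le_add_one hp h₀ i).lt_of_ne fun hi ↦ hlarge ⟨i, hi⟩)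
    _ = k * p := by rw [sum_const, card_univ, ZMod.card, smul_eq_mul, mul_comm]

end Plane

section LineSlice

/-- The parameters `x` at which the affine line `u + x • v` meets `A`. -/
def lineSlice (p : ℕ) [NeZero p] {V : Type*} [AddCommGroup V] [Module (ZMod p) V] [DecidableEq V]
    (A : Finset V) (u v : V) : Finset (ZMod p) :=
  {x | u + x • v ∈ A}

variable {p : ℕ} [Fact p.Prime] {V : Type*} [AddCommGroup V] [Module (ZMod p) V] [DecidableEq V]
  {A : Finset V}

theorem mem_lineSlice {u v : V} {x : ZMod p} : x ∈ lineSlice p A u v ↔ u + x • v ∈ A := by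
  simp [lineSlice]

theorem IsSumFree.isSumFreeFamily_lineSlice (hA : IsSumFree A) (v w : V) :
    IsSumFreeFamily fun i : ZMod p ↦ lineSlice p A (i • w) v := by
  rintro i j x hx y hy _ hxy rfl
  rw [mem_lineSlice] at hx hy hxy
  refine hA _ hx _ hy _ hxy ?_
  module

theorem IsSumFree.lineSlice_zero (hA : IsSumFree A) (v : V) : IsSumFree (lineSlice p A 0 v) := by
  simpa only [add_zero, smul_zero, IsSumFree] using
    hA.isSumFreeFamily_lineSlice (p := p) v 0 0 0

theorem IsSumFree.card_lineSlice_zero_le {k : ℕ} (hp : p = 3 * k + 1) (hA : IsSumFree A) (v : V) :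
    #(lineSlice p A 0 v) ≤ k := by
  have := (hA.lineSlice_zero (p := p) v).three_mul_card_le
  omega

variable [Fintype V]

theorem card_filter_add_smul_mem (A : Finset V) {c : ZMod p} (hc : c ≠ 0) (u : V) :
    #{w | u + c • w ∈ A} = #A := by
  have hbij : Function.Bijective fun w : V ↦ u + c • w :=
    (AddGroup.addLeft_bijective u).comp (MulAction.bijective₀ hc)
  exact card_bijective _ hbij fun w ↦ by simp

theorem sum_card_lineSlice_smul (A : Finset V) {c : ZMod p} (hc : c ≠ 0) (v : V) :
    ∑ w, #(lineSlice p A (c • w) v) = p * #A := by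
  simp only [lineSlice, card_filter]
  rw [sum_comm]
  simp only [← card_filter, add_comm (c • _), card_filter_add_smul_mem A hc, sum_const, card_univ,
    ZMod.card, smul_eq_mul]

theorem sum_card_lineSlice_zero (hA : 0 ∉ A) :
    ∑ v, #(lineSlice p A 0 v) = (p - 1) * #A := by
  simp only [lineSlice, card_filter]
  rw [sum_comm, ← sum_erase (a := 0) univ (by simp [hA])]
  simp only [← card_filter]
  rw [sum_congr rfl fun c hc ↦ card_filter_add_smul_mem A (ne_of_mem_erase hc) 0, sum_const,
    card_erase_of_mem (mem_univ _), card_univ, ZMod.card, smul_eq_mul]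

variable {k : ℕ} (hp : p = 3 * k + 1)

include hp

theorem IsSumFree.mul_card_le_of_card_lineSlice_eq (hA : IsSumFree A) {v : V}
    (hv : #(lineSlice p A 0 v) = k) : p * #A ≤ k * Fintype.card V := by
  have hplane (w : V) : ∑ i : ZMod p, #(lineSlice p A (i • w) v) ≤ k * p :=
    (hA.isSumFreeFamily_lineSlice v w).sum_card_le hp (by simpa using hv)
  have hsum : Fintype.card V * k + (p - 1) * (p * #A) ≤ Fintype.card V * (k * p) :=
    calc
      _ = ∑ i : ZMod p, ∑ w, #(lineSlice p A (i • w) v) := by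
        rw [← add_sum_erase _ _ (mem_univ 0),
          sum_congr rfl fun i hi ↦ sum_card_lineSlice_smul A (ne_of_mem_erase hi) v]
        simp [hv, ZMod.card]
      _ = ∑ w, ∑ i : ZMod p, #(lineSlice p A (i • w) v) := sum_comm
      _ ≤ ∑ _w : V, k * p := sum_le_sum fun w _ ↦ hplane w
      _ = _ := by simp
  have hk := two_le_of_prime_eq_three_mul_add_one hp
  rw [show p - 1 = 3 * k by omega] at hsum
  refine Nat.le_of_mul_le_mul_left ?_ (show 0 < 3 * k by omega)
  calc
    3 * k * (p * #A) ≤ Fintype.card V * (k * p) - Fintype.card V * k := Nat.le_sub_of_add_le' hsum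
    _ = 3 * k * (k * Fintype.card V) := Nat.sub_eq_of_eq_add (by rw [hp]; ring)

theorem IsSumFree.mul_card_le_of_card_lineSlice_lt (hA : IsSumFree A)
    (hlt : ∀ v, #(lineSlice p A 0 v) < k) : p * #A ≤ k * Fintype.card V := by
  have hsum : 3 * k * #A + Fintype.card V ≤ k * Fintype.card V :=
    calc
      _ = ∑ v, (#(lineSlice p A 0 v) + 1) := by
        rw [sum_add_distrib, sum_card_lineSlice_zero hA.zero_notMem, hp]
        simp
      _ ≤ ∑ _v : V, k := sum_le_sum fun v _ ↦ hlt v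
      _ = _ := by rw [sum_const, card_univ, smul_eq_mul, mul_comm]
  calc
    p * #A = 3 * k * #A + #A := by rw [hp]; ring
    _ ≤ 3 * k * #A + Fintype.card V := by gcongr; exact card_le_univ A
    _ ≤ k * Fintype.card V := hsum

omit [DecidableEq V] in
theorem IsSumFree.mul_card_le (hA : IsSumFree A) : p * #A ≤ k * Fintype.card V := by
  classical
  by_cases hv : ∃ v, #(lineSlice p A 0 v) = k
  · obtain ⟨v, hv⟩ := hv
    exact hA.mul_card_le_of_card_lineSlice_eq hp hv
  · exact hA.mul_card_le_of_card_lineSlice_lt hp fun v ↦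
      (hA.card_lineSlice_zero_le hp v).lt_of_ne fun h ↦ hv ⟨v, h⟩

end LineSlice

section Preimage

theorem IsSumFree.filter_mem {G H F : Type*} [Add G] [Add H] [FunLike F G H] [AddHomClass F G H]
    [Fintype G] [DecidableEq H] {M : Finset H} (hM : IsSumFree M) (φ : F) :
    IsSumFree ({x | φ x ∈ M} : Finset G) := by
  intro x hx y hy z hz hxyz
  simp only [mem_filter_univ] at hx hy hz
  exact hM _ hx _ hy _ hz (by rw [← hxyz, map_add])

theorem card_mul_card_filter_mem {G H : Type*} [AddGroup G] [Fintype G] [AddGroup H] [Fintype H]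
    [DecidableEq H] {φ : G →+ H} (hφ : Function.Surjective φ) (M : Finset H) :
    Fintype.card H * #{x | φ x ∈ M} = #M * Fintype.card G := by
  have hfiber (y : H) : #{x | φ x = y} = #{x | φ x = 0} :=
    AddMonoidHom.card_fiber_eq_of_mem_range φ (hφ y) (hφ 0)
  have hcard (N : Finset H) : #{x | φ x ∈ N} = #N * #{x | φ x = 0} := by
    rw [card_eq_sum_card_fiberwise (f := φ) (t := N) (by simp [Set.MapsTo]),
      sum_congr rfl fun y hy ↦ (?_ : _ = #{x | φ x = 0}), sum_const, smul_eq_mul]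
    rw [← hfiber y, filter_filter]
    congr 1
    grind
  have huniv : Fintype.card G = Fintype.card H * #{x | φ x = 0} := by simpa using hcard univ
  rw [hcard, huniv]
  ring

end Preimage

section MiddleThird

/-- The middle third `k + 1, …, 2 * k` of `ZMod p`, of interest for `p = 3 * k + 1`. -/
def middleThird (p k : ℕ) : Finset (ZMod p) :=
  (Icc (k + 1) (2 * k)).image (↑)

variable {p k : ℕ} (hp : p = 3 * k + 1)

include hp

theorem card_middleThird : #(middleThird p k) = k := by
  rw [middleThird, card_image_of_injOn, Nat.card_Icc]
  · omega
  · intro a ha b hb hab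
    simp only [coe_Icc, Set.mem_Icc] at ha hb
    exact Nat.ModEq.eq_of_lt_of_lt ((ZMod.natCast_eq_natCast_iff _ _ _).1 hab) (by omega) (by omega)

theorem isSumFree_middleThird : IsSumFree (middleThird p k) := by
  simp only [IsSumFree, SumsAvoid, middleThird, forall_mem_image, mem_Icc]
  intro a ha b hb c hc habc
  have hdvd : (p : ℤ) ∣ a + b - c := by
    rw [← ZMod.intCast_zmod_eq_zero_iff_dvd]
    push_cast
    rw [habc, sub_self]
  have := Int.eq_zero_of_abs_lt_dvd hdvd (by rw [abs_lt]; omega)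
  omega

end MiddleThird

theorem stmt_13_general {p k : ℕ} [Fact p.Prime] (hp : p = 3 * k + 1) (V : Type*) [AddCommGroup V]
    [Module (ZMod p) V] [Finite V] [Nontrivial V] :
    IsGreatest {m : ℕ | ∃ A : Finset V, IsSumFree A ∧ #A = m}
      (k * p ^ (Module.finrank (ZMod p) V - 1)) := by
  classical
  have := Fintype.ofFinite V
  have hcard : k * Fintype.card V = p * (k * p ^ (Module.finrank (ZMod p) V - 1)) := by
    rw [Module.card_eq_pow_finrank (K := ZMod p), ZMod.card,
      ← mul_pow_sub_one (Module.finrank_pos (R := ZMod p) (M := V)).ne']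
    ring
  have hp₀ : 0 < p := Nat.pos_of_neZero p
  constructor
  · obtain ⟨v, hv⟩ := exists_ne (0 : V)
    obtain ⟨φ, hφ⟩ := Module.Projective.exists_dual_ne_zero (ZMod p) hv
    have hsurj : Function.Surjective φ := φ.surjective (by rintro rfl; simp at hφ)
    refine ⟨_, (isSumFree_middleThird hp).filter_mem φ, Nat.eq_of_mul_eq_mul_left hp₀ ?_⟩
    have := card_mul_card_filter_mem (φ := φ.toAddMonoidHom) hsurj (middleThird p k)
    rwa [ZMod.card, card_middleThird hp, hcard] at this
  · rintro _ ⟨A, hA, rfl⟩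
    exact Nat.le_of_mul_le_mul_left ((hA.mul_card_le hp).trans_eq hcard) hp₀

theorem stmt_13 (k p s : ℕ) (hk : 1 ≤ k) (hp : p = 3 * k + 1) (hpp : p.Prime)
    (hs : 1 ≤ s) [NeZero p] :
    IsGreatest {m : ℕ | ∃ A : Finset (Fin s → ZMod p),
        (∀ a₁ ∈ A, ∀ a₂ ∈ A, ∀ a₃ ∈ A, a₁ + a₂ ≠ a₃) ∧ A.card = m}
      (k * p ^ (s - 1)) := by
  have : Fact p.Prime := ⟨hpp⟩
  have : Nonempty (Fin s) := ⟨⟨0, hs⟩⟩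
  simpa only [Module.finrank_fin_fun, IsSumFree, SumsAvoid] using
    stmt_13_general hp (Fin s → ZMod p)
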